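/- For all x, y, z ∈ 𝓡, (x ⊕ y) ⊗ z ∼ (x ⊗ z) ⊕ (y ⊗ z). -/

import Mathlib

/-- The ambient space `𝓡` of decimal representations: an integer part together
with a sequence of digits in `{0,…,9}`. -/
abbrev DecimalRep := ℤ × (ℕ → Fin 10)

namespace DecimalRep

open scoped Classical

/-- The truncation `[x]_k = x₀ + ∑_{i=1}^k x_i / 10^i` of `x` up to the `k`-th
digit, as a rational number. -/
def trunc (x : DecimalRep) (k : ℕ) : ℚ :=
  (x.1 : ℚ) + ∑ i ∈ Finset.range k, ((x.2 i : ℕ) : ℚ) / 10 ^ (i + 1)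

/-- The order `⪯` on `𝓡`: `x ⪯ y` iff every truncation of `x` is at most the
corresponding truncation of `y`. -/
def le (x y : DecimalRep) : Prop := ∀ k : ℕ, trunc x k ≤ trunc y k

/-- The strict order `≺` on `𝓡`. -/
def lt (x y : DecimalRep) : Prop := le x y ∧ x ≠ y

/-- Two decimal representations are equivalent ("have no gap") iff there is no
third element lying between them. -/
def equiv (x y : DecimalRep) : Prop :=
  ¬ ∃ z : DecimalRep, z ≠ x ∧ z ≠ y ∧
      ((le x z ∧ le z y) ∨ (le y z ∧ le z x))

/-- `𝓡₉`: decimal representations ending in an infinite string of nines. -/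
def allNines (x : DecimalRep) : Prop := ∃ N : ℕ, ∀ k ≥ N, x.2 k = 9

/-- `ℚ_F`: decimal representations ending in an infinite string of zeros. -/
def finiteDec (x : DecimalRep) : Prop := ∃ N : ℕ, ∀ k ≥ N, x.2 k = 0

/-- The decimal expansion map `ι : ℚ → 𝓡`, satisfying
`[ι(α)]_k = ⌊10^k·α⌋/10^k` for all `k`. -/
def iota (α : ℚ) : DecimalRep :=
  (⌊α⌋, fun k => ⟨(⌊α * 10 ^ (k + 1)⌋ % 10).toNat, by
    have h1 : (0 : ℤ) ≤ ⌊α * 10 ^ (k + 1)⌋ % 10 := Int.emod_nonneg _ (by norm_num)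
    have h2 : ⌊α * 10 ^ (k + 1)⌋ % 10 < 10 := Int.emod_lt_of_pos _ (by norm_num)
    omega⟩)

/-- `M` is a least upper bound of `W` in `(𝓡,⪯)`. -/
def IsLub (W : Set DecimalRep) (M : DecimalRep) : Prop :=
  (∀ w ∈ W, le w M) ∧ ∀ M' : DecimalRep, (∀ w ∈ W, le w M') → le M M'

/-- `M` is a greatest lower bound of `W` in `(𝓡,⪯)`. -/
def IsGlb (W : Set DecimalRep) (M : DecimalRep) : Prop :=
  (∀ w ∈ W, le M w) ∧ ∀ M' : DecimalRep, (∀ w ∈ W, le M' w) → le M' M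

/-- The least upper bound of a set in `(𝓡,⪯)` (junk value if none exists). -/
noncomputable def sup (W : Set DecimalRep) : DecimalRep :=
  if h : ∃ M, IsLub W M then h.choose else default

/-- The greatest lower bound of a set in `(𝓡,⪯)` (junk value if none exists). -/
noncomputable def inf (W : Set DecimalRep) : DecimalRep :=
  if h : ∃ M, IsGlb W M then h.choose else default

/-- Addition `x ⊕ y := sup {ι([x]_k + [y]_k) : k ∈ ℕ}` on `𝓡`. -/
noncomputable def add (x y : DecimalRep) : DecimalRep :=
  sup { z | ∃ k : ℕ, z = iota (trunc x k + trunc y k) }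

/-- The "additive inverse" map `Ψ(x₀.x₁x₂⋯) = (−1−x₀).(9−x₁)(9−x₂)⋯`. -/
def psi (x : DecimalRep) : DecimalRep :=
  (-1 - x.1, fun k => ⟨9 - (x.2 k).val, by have := (x.2 k).isLt; omega⟩)

/-- The signal map: `0` on the nonnegative part, `1` on the negative part. -/
noncomputable def sign (x : DecimalRep) : ℕ :=
  if le (iota 0) x then 0 else 1

/-- The absolute value `‖x‖ := max {x, Ψ(x)}` with respect to `⪯`. -/
noncomputable def norm (x : DecimalRep) : DecimalRep :=
  if le x (psi x) then psi x else x

/-- Multiplication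
`x ⊗ y := Ψ^(sign x + sign y) (sup {ι([‖x‖]_k · [‖y‖]_k) : k ∈ ℕ})` on `𝓡`. -/
noncomputable def mul (x y : DecimalRep) : DecimalRep :=
  psi^[sign x + sign y]
    (sup { z | ∃ k : ℕ, z = iota (trunc (norm x) k * trunc (norm y) k) })

/-- The multiplicative inverse
`x⁻¹ := Ψ^(sign x) (inf {ι(1/[‖x‖]_k) : k ∈ ℕ, [‖x‖]_k > 0})`. -/
noncomputable def inv (x : DecimalRep) : DecimalRep :=
  psi^[sign x]
    (inf { z | ∃ k : ℕ, 0 < trunc (norm x) k ∧ z = iota (1 / trunc (norm x) k) })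

/-- A sequence of rationals is Cauchy. -/
def IsCauchy (x : ℕ → ℚ) : Prop :=
  ∀ ε : ℚ, 0 < ε → ∃ N : ℕ, ∀ m n : ℕ, N ≤ m → N ≤ n → |x m - x n| < ε

/-- The upper limit `inf { sup {f k : k ≥ n} : n ∈ ℕ }` of a sequence in `𝓡`. -/
noncomputable def upperLimit (f : ℕ → DecimalRep) : DecimalRep :=
  inf { z | ∃ n : ℕ, z = sup { w | ∃ k : ℕ, n ≤ k ∧ w = f k } }

/-- The lower limit `sup { inf {f k : k ≥ n} : n ∈ ℕ }` of a sequence in `𝓡`. -/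
noncomputable def lowerLimit (f : ℕ → DecimalRep) : DecimalRep :=
  sup { z | ∃ n : ℕ, z = inf { w | ∃ k : ℕ, n ≤ k ∧ w = f k } }

end DecimalRep

namespace DecimalRep

theorem cast_le1 {a b : ℚ} {k : ℕ} (h : a ≤ b + 1 / 10 ^ k) :
    (a : ℝ) ≤ (b : ℝ) + 1 / 10 ^ k := by
  have h' : (a : ℝ) ≤ ((b + 1 / 10 ^ k : ℚ) : ℝ) := Rat.cast_le.mpr h
  push_cast at h'
  exact h'

theorem trunc_zero (x : DecimalRep) : trunc x 0 = x.1 := by simp [trunc]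

theorem trunc_succ (x : DecimalRep) (k : ℕ) :
    trunc x (k+1) = trunc x k + ((x.2 k : ℕ) : ℚ) / 10 ^ (k + 1) := by
  simp only [trunc, Finset.sum_range_succ]; ring

theorem ext_trunc {x y : DecimalRep} (h : ∀ k, trunc x k = trunc y k) : x = y := by
  refine Prod.ext ?_ ?_
  · have := h 0
    rw [trunc_zero, trunc_zero] at this
    exact_mod_cast this
  · funext k
    have h1 := h (k+1)
    rw [trunc_succ, trunc_succ, h k] at h1
    have h2 := add_left_cancel h1
    have h3 : ((x.2 k : ℕ) : ℚ) = ((y.2 k : ℕ) : ℚ) := by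
      field_simp at h2
      exact h2
    exact Fin.ext (by exact_mod_cast h3)

theorem trunc_int (x : DecimalRep) (k : ℕ) : ∃ N : ℤ, trunc x k = (N : ℚ) / 10 ^ k := by
  induction k with
  | zero => exact ⟨x.1, by simp [trunc]⟩
  | succ k ih =>
    obtain ⟨N, hN⟩ := ih
    refine ⟨10 * N + (x.2 k : ℕ), ?_⟩
    rw [trunc_succ, hN]
    push_cast
    field_simp
    ring

theorem trunc_mono (x : DecimalRep) : Monotone (trunc x) := by
  refine monotone_nat_of_le_succ fun k => ?_
  rw [trunc_succ]
  have : (0:ℚ) ≤ ((x.2 k : ℕ) : ℚ) / 10 ^ (k + 1) := by positivity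
  linarith

theorem trunc_anti (x : DecimalRep) : Antitone (fun k => trunc x k + 1 / 10 ^ k) := by
  refine antitone_nat_of_succ_le fun k => ?_
  simp only [trunc_succ]
  have h9 : ((x.2 k : ℕ) : ℚ) ≤ 9 := by
    have := (x.2 k).isLt
    exact_mod_cast (by omega : (x.2 k : ℕ) ≤ 9)
  have h : ((x.2 k : ℕ) : ℚ) / 10 ^ (k + 1) ≤ 9 / 10 ^ (k+1) := by gcongr
  have e : (1:ℚ) / 10 ^ k = 9 / 10 ^ (k+1) + 1 / 10 ^ (k+1) := by field_simp; ring
  linarith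

theorem trunc_le_add (x : DecimalRep) (i k : ℕ) : trunc x i ≤ trunc x k + 1 / 10 ^ k := by
  have h1 := trunc_mono x (le_max_left i k)
  have h2 := trunc_anti x (le_max_right i k)
  simp only at h2
  have : (0:ℚ) ≤ 1 / 10 ^ (max i k) := by positivity
  linarith

/-- real value -/
noncomputable def val (x : DecimalRep) : ℝ := ⨆ k, (trunc x k : ℝ)

theorem bdd (x : DecimalRep) : BddAbove (Set.range fun k => (trunc x k : ℝ)) := by
  refine ⟨((trunc x 0 + 1 / 10 ^ 0 : ℚ) : ℝ), ?_⟩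
  rintro _ ⟨k, rfl⟩
  exact Rat.cast_le.mpr (trunc_le_add x k 0)

theorem trunc_le_val (x : DecimalRep) (k : ℕ) : (trunc x k : ℝ) ≤ val x := le_ciSup (bdd x) k

theorem val_le (x : DecimalRep) (k : ℕ) : val x ≤ (trunc x k : ℝ) + 1 / 10 ^ k := by
  refine ciSup_le fun i => ?_
  exact cast_le1 (trunc_le_add x i k)

theorem tendsto_trunc (x : DecimalRep) :
    Filter.Tendsto (fun k => (trunc x k : ℝ)) Filter.atTop (nhds (val x)) :=
  tendsto_atTop_ciSup (fun _ _ h => by exact_mod_cast trunc_mono x h) (bdd x)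

theorem tendsto_pow10 : Filter.Tendsto (fun k : ℕ => (1:ℝ) / 10 ^ k) Filter.atTop (nhds 0) := by
  have := tendsto_pow_atTop_nhds_zero_of_lt_one (r := (1/10:ℝ)) (by norm_num) (by norm_num)
  simpa [one_div, inv_pow] using this

theorem val_eq (x : DecimalRep) (r : ℝ) (h1 : ∀ k, (trunc x k : ℝ) ≤ r)
    (h2 : ∀ k, r ≤ (trunc x k : ℝ) + 1 / 10 ^ k) : val x = r := by
  apply le_antisymm (ciSup_le h1)
  have := (tendsto_trunc x).add tendsto_pow10
  rw [add_zero] at this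
  exact ge_of_tendsto' this h2

theorem val_mono {x y : DecimalRep} (h : le x y) : val x ≤ val y :=
  ciSup_le fun k => le_trans (by exact_mod_cast h k) (trunc_le_val y k)

theorem trunc_psi (x : DecimalRep) (k : ℕ) : trunc (psi x) k = - trunc x k - 1 / 10 ^ k := by
  induction k with
  | zero => simp [trunc, psi]; ring
  | succ k ih =>
    rw [trunc_succ, trunc_succ, ih]
    have h : (x.2 k : ℕ) ≤ 9 := by have := (x.2 k).isLt; omega
    simp only [psi]
    push_cast [Nat.cast_sub h]
    field_simp
    ring

theorem val_psi (x : DecimalRep) : val (psi x) = - val x := by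
  apply val_eq
  · intro k
    rw [trunc_psi]; push_cast
    linarith [val_le x k]
  · intro k
    rw [trunc_psi]; push_cast
    linarith [trunc_le_val x k]

theorem trunc_step {x y : DecimalRep} (hv : val x = val y) (k : ℕ) (h : trunc x k < trunc y k) :
    (trunc y k : ℝ) = val x ∧ (trunc x k : ℝ) + 1 / 10 ^ k = val x := by
  obtain ⟨N, hN⟩ := trunc_int x k
  obtain ⟨M, hM⟩ := trunc_int y k
  have hp : (0:ℚ) < 10 ^ k := by positivity
  have hNM : N + 1 ≤ M := by
    rw [hN, hM, div_lt_div_iff_of_pos_right hp] at h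
    exact_mod_cast h
  have h1 : trunc x k + 1 / 10 ^ k ≤ trunc y k := by
    rw [hN, hM, ← add_div]
    gcongr
    exact_mod_cast hNM
  have h2 : (trunc x k : ℝ) + 1 / 10 ^ k ≤ trunc y k := by
    have h' : ((trunc x k + 1 / 10 ^ k : ℚ) : ℝ) ≤ trunc y k := Rat.cast_le.mpr h1
    push_cast at h'
    exact h'
  have h3 := val_le x k
  have h4 := trunc_le_val y k
  constructor <;> linarith

theorem between {x y z : DecimalRep} (hv : val x = val y) (h1 : le x z) (h2 : le z y) :
    z = x ∨ z = y := by
  have hz : val x = val z := le_antisymm (val_mono h1) (hv ▸ val_mono h2)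
  by_contra hc
  push Not at hc
  obtain ⟨hx, hy⟩ := hc
  have : ∃ k, trunc x k < trunc z k := by
    by_contra hh
    push Not at hh
    exact hx (ext_trunc fun k => le_antisymm (hh k) (h1 k))
  obtain ⟨k, hk⟩ := this
  have : ∃ k, trunc z k < trunc y k := by
    by_contra hh
    push Not at hh
    exact hy (ext_trunc fun k => le_antisymm (h2 k) (hh k))
  obtain ⟨j, hj⟩ := this
  have a := (trunc_step hz k hk).1
  have b := (trunc_step (hz ▸ hv) j hj).2
  have c : (trunc z k : ℝ) ≤ trunc z (max k j) := by
    exact_mod_cast trunc_mono z (le_max_left k j)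
  have d : (trunc z (max k j) : ℝ) + 1 / 10 ^ (max k j) ≤ trunc z j + 1 / 10 ^ j := by
    have h' := (Rat.cast_le (K := ℝ)).mpr (trunc_anti z (le_max_right k j))
    push_cast at h'
    exact h'
  have e : (0:ℝ) < 1 / 10 ^ (max k j) := by positivity
  linarith

theorem equiv_of_val {x y : DecimalRep} (hv : val x = val y) : equiv x y := by
  rintro ⟨z, hx, hy, ⟨h1, h2⟩ | ⟨h1, h2⟩⟩
  · rcases between hv h1 h2 with h | h
    · exact hx h
    · exact hy h
  · rcases between hv.symm h1 h2 with h | h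
    · exact hy h
    · exact hx h

theorem floor_step (α : ℚ) (k : ℕ) : ⌊α * 10 ^ (k+1)⌋ / 10 = ⌊α * 10 ^ k⌋ := by
  symm
  rw [Int.floor_eq_iff]
  have e : α * 10 ^ (k+1) = 10 * (α * 10 ^ k) := by ring
  have h1 := Int.floor_le (α * 10 ^ (k+1))
  have h2 := Int.lt_floor_add_one (α * 10 ^ (k+1))
  set n := ⌊α * 10 ^ (k+1)⌋
  have h3 : 10 * (n / 10) ≤ n := by omega
  have h4 : n + 1 ≤ 10 * (n / 10) + 10 := by omega
  have h3' : (10:ℚ) * ((n / 10 : ℤ) : ℚ) ≤ n := by exact_mod_cast h3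
  have h4' : (n:ℚ) + 1 ≤ 10 * ((n / 10 : ℤ) : ℚ) + 10 := by exact_mod_cast h4
  constructor <;> linarith

theorem exists_trunc (c : ℕ → ℤ) (h : ∀ n, 10 * c n ≤ c (n+1) ∧ c (n+1) ≤ 10 * c n + 9) :
    ∃ M : DecimalRep, ∀ n, trunc M n = (c n : ℚ) / 10 ^ n := by
  refine ⟨(c 0, fun k => ⟨(c (k+1) - 10 * c k).toNat, by have := h k; omega⟩), fun n => ?_⟩
  induction n with
  | zero => simp [trunc]
  | succ k ih =>
    rw [trunc_succ, ih]
    have hk : (((c (k+1) - 10 * c k).toNat : ℤ)) = c (k+1) - 10 * c k :=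
      Int.toNat_of_nonneg (by have := h k; omega)
    have hk' : (((c (k+1) - 10 * c k).toNat : ℚ)) = c (k+1) - 10 * c k := by exact_mod_cast hk
    simp only [hk']
    field_simp
    ring

theorem trunc_iota (α : ℚ) (k : ℕ) : trunc (iota α) k = (⌊α * 10 ^ k⌋ : ℚ) / 10 ^ k := by
  induction k with
  | zero => simp [trunc, iota]
  | succ k ih =>
    rw [trunc_succ, ih, ← floor_step]
    simp only [iota]
    set n := ⌊α * 10 ^ (k+1)⌋
    have hk : ((n % 10).toNat : ℤ) = n % 10 := Int.toNat_of_nonneg (by omega)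
    have hk' : ((n % 10).toNat : ℚ) = ((n % 10 : ℤ) : ℚ) := by exact_mod_cast hk
    have hn : n = 10 * (n / 10) + n % 10 := by omega
    have hn' : (n : ℚ) = 10 * ((n / 10 : ℤ) : ℚ) + ((n % 10 : ℤ) : ℚ) := by exact_mod_cast hn
    rw [hk', hn']
    field_simp
    ring

theorem val_sup (a : ℕ → ℚ) (r : ℝ) (hr : IsLUB (Set.range fun k => (a k : ℝ)) r) :
    val (sup { z | ∃ k : ℕ, z = iota (a k) }) = r := by
  have ha : ∀ k, (a k : ℝ) ≤ r := fun k => hr.1 ⟨k, rfl⟩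
  have hmax : ∀ n : ℕ, ∃ m : ℤ, (∃ k, ⌊a k * 10 ^ n⌋ = m) ∧ ∀ k, ⌊a k * 10 ^ n⌋ ≤ m := by
    intro n
    obtain ⟨m, h1, h2⟩ := Int.exists_greatest_of_bdd (P := fun m => ∃ k, ⌊a k * 10 ^ n⌋ = m)
      ⟨⌊r * 10 ^ n⌋, by
        rintro _ ⟨k, rfl⟩
        rw [Int.le_floor]
        have h := Int.floor_le (a k * 10 ^ n)
        have h' : ((⌊a k * 10 ^ n⌋ : ℤ) : ℝ) ≤ (a k : ℝ) * 10 ^ n := by exact_mod_cast h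
        refine h'.trans ?_
        gcongr
        exact ha k⟩ ⟨_, 0, rfl⟩
    exact ⟨m, h1, fun k => h2 _ ⟨k, rfl⟩⟩
  choose c hc1 hc2 using hmax
  obtain ⟨M, hM⟩ := exists_trunc c (by
    intro n
    constructor
    · obtain ⟨k, hk⟩ := hc1 n
      have := hc2 (n+1) k
      have := floor_step (a k) n
      omega
    · obtain ⟨k, hk⟩ := hc1 (n+1)
      have := hc2 n k
      have := floor_step (a k) n
      omega)
  have hlub : IsLub { z | ∃ k : ℕ, z = iota (a k) } M := by
    constructor
    · rintro _ ⟨k, rfl⟩ n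
      rw [trunc_iota, hM]
      gcongr
      exact hc2 n k
    · intro M' h n
      obtain ⟨k, hk⟩ := hc1 n
      have := h _ ⟨k, rfl⟩ n
      rwa [trunc_iota, hk, ← hM] at this
  have hv : val M = r := by
    apply val_eq
    · intro n
      obtain ⟨k, hk⟩ := hc1 n
      refine le_trans ?_ (ha k)
      rw [hM, ← hk]
      have h := Int.floor_le (a k * 10 ^ n)
      have : (⌊a k * 10 ^ n⌋ : ℚ) / 10 ^ n ≤ a k := by
        rw [div_le_iff₀ (by positivity)]; exact h
      exact_mod_cast this
    · intro n
      apply hr.2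
      rintro _ ⟨k, rfl⟩
      have h := Int.lt_floor_add_one (a k * 10 ^ n)
      have h2 : ((⌊a k * 10 ^ n⌋ : ℤ) : ℚ) ≤ c n := by exact_mod_cast hc2 n k
      have : a k ≤ trunc M n + 1 / 10 ^ n := by
        rw [hM, ← add_div, le_div_iff₀ (by positivity)]
        linarith
      exact cast_le1 this
  have hex : ∃ M, IsLub { z | ∃ k : ℕ, z = iota (a k) } M := ⟨M, hlub⟩
  rw [← hv]
  unfold sup
  rw [dif_pos hex]
  have hs := hex.choose_spec
  exact le_antisymm (val_mono (hs.2 _ hlub.1)) (val_mono (hlub.2 _ hs.1))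

theorem val_add (x y : DecimalRep) : val (add x y) = val x + val y := by
  unfold add
  apply val_sup (fun k => trunc x k + trunc y k)
  apply isLUB_of_tendsto_atTop
  · intro i j h
    have := add_le_add (trunc_mono x h) (trunc_mono y h)
    exact Rat.cast_le.mpr this
  · push_cast
    exact (tendsto_trunc x).add (tendsto_trunc y)

theorem sign_eq (x : DecimalRep) : sign x = if 0 ≤ x.1 then 0 else 1 := by
  have : le (iota 0) x ↔ 0 ≤ x.1 := by
    constructor
    · intro h
      have := h 0
      rw [trunc_iota, trunc_zero] at this
      simpa using this
    · intro h k
      rw [trunc_iota]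
      have h1 := trunc_mono x (Nat.zero_le k)
      rw [trunc_zero] at h1
      have : (0:ℚ) ≤ x.1 := by exact_mod_cast h
      simp
      linarith
  simp [sign, this]

theorem norm_eq (x : DecimalRep) : norm x = if 0 ≤ x.1 then x else psi x := by
  have : le x (psi x) ↔ ¬ 0 ≤ x.1 := by
    constructor
    · intro h h0
      have := h 0
      rw [trunc_zero, trunc_zero] at this
      simp only [psi] at this
      have : x.1 ≤ -1 - x.1 := by exact_mod_cast this
      omega
    · intro h k
      rw [trunc_psi]
      have h1 := trunc_anti x (Nat.zero_le k)
      have h2 := trunc_le_add x k 0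
      simp only [trunc_zero] at h1 h2
      have : (x.1:ℚ) ≤ -1 := by exact_mod_cast (by omega : x.1 ≤ -1)
      norm_num at h1 h2 ⊢
      linarith
  unfold norm
  by_cases h : 0 ≤ x.1 <;> simp [this, h]

theorem norm_nonneg (x : DecimalRep) (k : ℕ) : 0 ≤ trunc (norm x) k := by
  refine le_trans ?_ (trunc_mono _ (Nat.zero_le k))
  rw [trunc_zero, norm_eq]
  split_ifs with h
  · exact_mod_cast h
  · simp only [psi]
    exact_mod_cast (by omega : 0 ≤ -1 - x.1)

theorem val_norm (x : DecimalRep) : val (norm x) = (-1) ^ sign x * val x := by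
  rw [norm_eq, sign_eq]
  split_ifs <;> simp [val_psi]

theorem val_psi_iter (n : ℕ) (x : DecimalRep) : val (psi^[n] x) = (-1) ^ n * val x := by
  induction n with
  | zero => simp
  | succ n ih => rw [Function.iterate_succ_apply', val_psi, ih]; ring

theorem val_mul (x y : DecimalRep) : val (mul x y) = val x * val y := by
  unfold mul
  rw [val_psi_iter, val_sup (fun k => trunc (norm x) k * trunc (norm y) k)
    (val (norm x) * val (norm y))]
  · rw [val_norm, val_norm, pow_add]
    have h1 : ((-1:ℝ) ^ sign x) * (-1) ^ sign x = 1 := by rw [← mul_pow]; simp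
    have h2 : ((-1:ℝ) ^ sign y) * (-1) ^ sign y = 1 := by rw [← mul_pow]; simp
    calc _ = (((-1:ℝ) ^ sign x) * (-1) ^ sign x) * (((-1:ℝ) ^ sign y) * (-1) ^ sign y)
          * (val x * val y) := by ring
      _ = _ := by rw [h1, h2]; ring
  · apply isLUB_of_tendsto_atTop
    · intro i j h
      have := mul_le_mul (trunc_mono (norm x) h) (trunc_mono (norm y) h) (norm_nonneg y i)
        (norm_nonneg x j)
      exact Rat.cast_le.mpr this
    · push_cast
      exact (tendsto_trunc _).mul (tendsto_trunc _)

end DecimalRep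

open DecimalRep in
/-- Multiplication distributes over addition on `𝓡` up to equivalence. -/
theorem add_mul_equiv (x y z : DecimalRep) :
    equiv (mul (add x y) z) (add (mul x z) (mul y z)) := by
  apply equiv_of_val
  rw [val_mul, val_add, val_add, val_mul, val_mul]
  ring
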